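/- Let n be a positive integer with coprime divisors a and b, let m = n/(ab), and let c be an integer with gcd(c, ab) = 1. Write rad(m) = m₁m₂m₃ with m₁ ∣ a, m₂ ∣ b, gcd(m₃, ab) = 1. Then the number of pairs (x,y) with 1 ≤ x ≤ n/a, 1 ≤ y ≤ n/b, gcd(x, n/a) = gcd(y, n/b) = 1 and ax + by ≡ c (mod n) equals m · ∏_{p ∣ m, p ∣ ab} (1 − 1/p) · ∏_{p ∣ n, p ∤ ab, p ∣ c} (1 − 1/p) · ∏_{p ∣ n, p ∤ abc} (1 − 2/p). -/

import Mathlib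

/-!
Write `n = a * b * m`. Starting from one integer solution `(x, y)` of `a * X + b * Y = c`, the
solutions of the congruence modulo `n` are exactly `(x + b * t, y - a * t)` with `t` running through
the residues modulo `m`. Since `c` is prime to `a * b`, both coordinates are automatically prime to
`b` and `a` respectively, so the coprimality conditions say that the polynomial
`(x + b * T) * (y - a * T)` takes a unit value at `t`.

For any integer polynomial `f`, the reduction `ZMod m → ∏ ZMod p` over the primes `p ∣ m` is
surjective, has fibres of equal size and detects units; hence `f` takes unit values at
`m * ∏ (1 - ρ p / p)` residues, with `ρ p` the number of roots of `f` modulo `p`. Here the two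
linear factors have roots `-x / b` and `y / a`. One of them disappears when `p ∣ a * b`, and
otherwise they coincide exactly when `p ∣ c`.
-/

open Polynomial

section UnitValues

theorem ncard_preimage_of_surjective {G H : Type*} [AddGroup G] [AddGroup H] {φ : G →+ H}
    (hφ : Function.Surjective φ) (T : Set H) :
    (φ ⁻¹' T).ncard = T.ncard * Nat.card φ.ker := by
  rw [← Nat.card_coe_set_eq, ← Nat.card_coe_set_eq, ← Nat.card_prod]
  exact Nat.card_congr <|
    (Equiv.sigmaSubtypeFiberEquivSubtype φ fun _ => Iff.rfl).symm.trans <|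
      Equiv.sigmaEquivProdOfEquiv fun h : T => φ.fiberEquivKerOfSurjective hφ h

theorem ncard_isUnit_aeval_mul_card {k R S : Type*} [CommRing k] [CommRing R] [CommRing S]
    [Algebra k R] [Algebra k S] {φ : R →ₐ[k] S} [IsLocalHom φ] (hφ : Function.Surjective φ)
    (f : k[X]) :
    {r : R | IsUnit (aeval r f)}.ncard * Nat.card S =
      Nat.card R * {s : S | IsUnit (aeval s f)}.ncard := by
  let ψ : R →+ S := φ.toLinearMap.toAddMonoidHom
  have hpre : {r : R | IsUnit (aeval r f)} = ψ ⁻¹' {s : S | IsUnit (aeval s f)} := by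
    ext r
    simp [ψ, aeval_algHom_apply]
  have hcard : Nat.card R = Nat.card S * Nat.card ψ.ker := by
    simpa using ncard_preimage_of_surjective (φ := ψ) hφ Set.univ
  rw [hpre, ncard_preimage_of_surjective (φ := ψ) hφ, hcard]
  ring

theorem ncard_isUnit_aeval_pi {ι k : Type*} [Fintype ι] [CommRing k] {R : ι → Type*}
    [∀ i, CommRing (R i)] [∀ i, Algebra k (R i)] (f : k[X]) :
    {s : Π i, R i | IsUnit (aeval s f)}.ncard = ∏ i, {r : R i | IsUnit (aeval r f)}.ncard := by
  have haeval (s : Π i, R i) (i : ι) : aeval s f i = aeval (s i) f :=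
    (aeval_algHom_apply (Pi.evalAlgHom k R i) s f).symm
  simp only [← Nat.card_coe_set_eq, ← Nat.card_pi, Pi.isUnit_iff, haeval]
  exact Nat.card_congr
    (Equiv.subtypePiEquivPi (p := fun i (r : R i) => IsUnit (aeval r f)))

theorem ncard_isUnit_aeval_add_ncard_roots {k F : Type*} [CommRing k] [Field F] [Finite F]
    [Algebra k F] (f : k[X]) :
    {s : F | IsUnit (aeval s f)}.ncard + {s : F | aeval s f = 0}.ncard = Nat.card F := by
  have : {s : F | IsUnit (aeval s f)} = {s : F | aeval s f = 0}ᶜ := by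
    ext s
    simp
  rw [this, add_comm, Set.ncard_add_ncard_compl]

/-- The reduction map from `ZMod m` to the product of the prime fields `ZMod p`, `p ∣ m`, along
which unit values of polynomials are counted. It is a `ℤ`-algebra map so that it commutes with
`aeval`. -/
def reduceModPrimeFactors (m : ℕ) : ZMod m →ₐ[ℤ] Π p : m.primeFactors, ZMod p :=
  AlgHom.pi fun p => (ZMod.castHom (Nat.dvd_of_mem_primeFactors p.2) (ZMod p)).toIntAlgHom

theorem reduceModPrimeFactors_surjective (m : ℕ) :
    Function.Surjective (reduceModPrimeFactors m) := by
  have hcop : Pairwise (Function.onFun Nat.Coprime fun p : m.primeFactors => (p : ℕ)) :=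
    fun p q hpq => (Nat.coprime_primes (Nat.prime_of_mem_primeFactors p.2)
      (Nat.prime_of_mem_primeFactors q.2)).2 (Subtype.coe_ne_coe.2 hpq)
  have hdvd : ∏ p : m.primeFactors, (p : ℕ) ∣ m := by
    rw [Finset.prod_coe_sort m.primeFactors fun p => p]
    exact Nat.prod_primeFactors_dvd m
  have hcomp : (reduceModPrimeFactors m).toRingHom =
      (ZMod.prodEquivPi _ hcop).toRingHom.comp (ZMod.castHom hdvd _) := Subsingleton.elim _ _
  change Function.Surjective (reduceModPrimeFactors m).toRingHom
  rw [hcomp]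
  exact (ZMod.prodEquivPi _ hcop).surjective.comp (ZMod.castHom_surjective hdvd)

instance isLocalHom_reduceModPrimeFactors (m : ℕ) [NeZero m] :
    IsLocalHom (reduceModPrimeFactors m) where
  map_nonunit t ht := by
    obtain ⟨z, rfl⟩ := ZMod.natCast_zmod_surjective t
    simp only [map_natCast, Pi.isUnit_iff, Pi.natCast_apply, ZMod.isUnit_iff_coprime] at ht ⊢
    refine Nat.coprime_of_dvd fun p hp hpz hpm => ?_
    exact hp.one_lt.ne' <| Nat.eq_one_of_dvd_coprimes
      (ht ⟨p, Nat.mem_primeFactors.2 ⟨hp, hpm, NeZero.ne m⟩⟩) hpz dvd_rfl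

theorem ncard_isUnit_aeval_zmod (m : ℕ) [NeZero m] (f : ℤ[X]) :
    ({t : ZMod m | IsUnit (aeval t f)}.ncard : ℚ) =
      m * ∏ p ∈ m.primeFactors, (1 - {t : ZMod p | aeval t f = 0}.ncard / (p : ℚ)) := by
  have hreduce := ncard_isUnit_aeval_mul_card (reduceModPrimeFactors_surjective m) f
  rw [ncard_isUnit_aeval_pi (R := fun p : m.primeFactors => ZMod p), Nat.card_pi,
    Nat.card_zmod] at hreduce
  simp only [Nat.card_zmod] at hreduce
  rw [Finset.prod_coe_sort m.primeFactors fun p => p, Finset.prod_coe_sort m.primeFactors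
    fun p => {t : ZMod p | IsUnit (aeval t f)}.ncard] at hreduce
  have hfactor (p) (hp : p ∈ m.primeFactors) : ({t : ZMod p | IsUnit (aeval t f)}.ncard : ℚ) / p =
      1 - {t : ZMod p | aeval t f = 0}.ncard / (p : ℚ) := by
    have : Fact p.Prime := ⟨Nat.prime_of_mem_primeFactors hp⟩
    have hp0 : (p : ℚ) ≠ 0 := Nat.cast_ne_zero.2 (NeZero.ne p)
    have hadd := ncard_isUnit_aeval_add_ncard_roots (F := ZMod p) f
    rw [Nat.card_zmod] at hadd
    rw [eq_sub_iff_add_eq, ← add_div, div_eq_one_iff_eq hp0]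
    exact_mod_cast hadd
  rw [← Finset.prod_congr rfl hfactor, Finset.prod_div_distrib,
    mul_div_assoc', eq_div_iff (Finset.prod_ne_zero_iff.2 fun p hp =>
      Nat.cast_ne_zero.2 (Nat.prime_of_mem_primeFactors hp).ne_zero)]
  rw [← Nat.cast_prod, ← Nat.cast_prod]
  exact_mod_cast hreduce

end UnitValues

section Roots

variable {F : Type*} [Field F] {a b x y : F}

theorem ncard_roots_of_mul_eq_zero (hab : a * b = 0) (hc : a * x + b * y ≠ 0) :
    {s : F | (x + b * s) * (y - a * s) = 0}.ncard = 1 := by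
  rw [Set.ncard_eq_one]
  rcases mul_eq_zero.1 hab with rfl | rfl
  · obtain ⟨hb, hy⟩ : b ≠ 0 ∧ y ≠ 0 := by simpa using hc
    refine ⟨-x / b, Set.ext fun s => ?_⟩
    rw [Set.mem_ofPred_eq, Set.mem_singleton_iff]
    grind
  · obtain ⟨ha, hx⟩ : a ≠ 0 ∧ x ≠ 0 := by simpa using hc
    refine ⟨y / a, Set.ext fun s => ?_⟩
    rw [Set.mem_ofPred_eq, Set.mem_singleton_iff]
    grind

theorem roots_eq_pair (hab : a * b ≠ 0) :
    {s : F | (x + b * s) * (y - a * s) = 0} = {-x / b, y / a} := by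
  ext s
  rw [Set.mem_ofPred_eq, Set.mem_insert_iff, Set.mem_singleton_iff]
  grind

theorem neg_div_eq_div_iff_linear_eq_zero (hab : a * b ≠ 0) :
    -x / b = y / a ↔ a * x + b * y = 0 := by
  grind

theorem ncard_roots_of_linear_eq_zero (hab : a * b ≠ 0) (hc : a * x + b * y = 0) :
    {s : F | (x + b * s) * (y - a * s) = 0}.ncard = 1 := by
  rw [roots_eq_pair hab, (neg_div_eq_div_iff_linear_eq_zero hab).2 hc, Set.pair_eq_singleton,
    Set.ncard_singleton]

theorem ncard_roots_of_linear_ne_zero (hab : a * b ≠ 0) (hc : a * x + b * y ≠ 0) :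
    {s : F | (x + b * s) * (y - a * s) = 0}.ncard = 2 := by
  rw [roots_eq_pair hab, Set.ncard_pair (mt (neg_div_eq_div_iff_linear_eq_zero hab).1 hc)]

end Roots

/-- The product of the two coordinates of `(x + b * T, y - a * T)`, the general solution of
`a * X + b * Y = c` in terms of a particular one `(x, y)`. A residue `t` modulo `m` at which it is a
unit is one for which both coordinates are prime to `m`. -/
noncomputable def coordProd (a b x y : ℤ) : ℤ[X] := (C x + C b * X) * (C y - C a * X)

theorem aeval_coordProd {R : Type*} [CommRing R] (a b x y : ℤ) (t : R) :
    aeval t (coordProd a b x y) = (x + b * t) * (y - a * t) := by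
  simp [coordProd]

section RootsModPrime

variable {a b x y c : ℤ} {p : ℕ} [Fact p.Prime]

theorem ncard_roots_coordProd_of_dvd (hxy : a * x + b * y = c) (hab : (p : ℤ) ∣ a * b)
    (hc : ¬ (p : ℤ) ∣ c) : {t : ZMod p | aeval t (coordProd a b x y) = 0}.ncard = 1 := by
  subst hxy
  simp only [← ZMod.intCast_zmod_eq_zero_iff_dvd, aeval_coordProd] at hab hc ⊢
  push_cast at hab hc
  exact ncard_roots_of_mul_eq_zero hab hc

theorem ncard_roots_coordProd_of_not_dvd_of_dvd (hxy : a * x + b * y = c)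
    (hab : ¬ (p : ℤ) ∣ a * b) (hc : (p : ℤ) ∣ c) :
    {t : ZMod p | aeval t (coordProd a b x y) = 0}.ncard = 1 := by
  subst hxy
  simp only [← ZMod.intCast_zmod_eq_zero_iff_dvd, aeval_coordProd] at hab hc ⊢
  push_cast at hab hc
  exact ncard_roots_of_linear_eq_zero hab hc

theorem ncard_roots_coordProd_of_not_dvd (hxy : a * x + b * y = c)
    (habc : ¬ (p : ℤ) ∣ a * b * c) :
    {t : ZMod p | aeval t (coordProd a b x y) = 0}.ncard = 2 := by
  subst hxy
  simp only [← ZMod.intCast_zmod_eq_zero_iff_dvd, aeval_coordProd] at habc ⊢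
  push_cast at habc
  exact ncard_roots_of_linear_ne_zero (left_ne_zero_of_mul habc) (right_ne_zero_of_mul habc)

end RootsModPrime

theorem existsUnique_mem_Icc_modEq {N : ℕ} (hN : 0 < N) (z : ℤ) :
    ∃! u : ℕ, u ∈ Finset.Icc 1 N ∧ u ≡ z [ZMOD N] := by
  obtain ⟨r, hrN, hr⟩ := Int.existsUnique_equiv_nat (z - 1) (Int.natCast_pos.2 hN)
  refine ⟨r + 1, ⟨Finset.mem_Icc.2 (by omega), by simpa using hr.add_right 1⟩, ?_⟩
  rintro u ⟨hu, huz⟩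
  have : u ≡ r + 1 [MOD N] :=
    Int.natCast_modEq_iff.1 (huz.trans (by simpa using (hr.add_right 1).symm))
  rw [Finset.mem_Icc] at hu
  exact this.eq_of_abs_lt (by rw [abs_lt]; push_cast; omega)

theorem linear_modEq_iff_exists {a b m x y c : ℤ} (hb : b ≠ 0) (hab : IsCoprime a b)
    (hxy : a * x + b * y = c) (u v : ℤ) :
    a * u + b * v ≡ c [ZMOD a * b * m] ↔
      ∃ t, u ≡ x + b * t [ZMOD b * m] ∧ v ≡ y - a * t [ZMOD a * m] := by
  constructor
  · intro h
    obtain ⟨k, hk⟩ := Int.modEq_iff_add_fac.1 h.symm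
    obtain ⟨t, ht⟩ : b ∣ u - x :=
      hab.symm.dvd_of_dvd_mul_left ⟨y - v + a * m * k, by linear_combination hk - hxy⟩
    refine ⟨t, by rw [← ht]; simp, (Int.modEq_iff_add_fac.2 ⟨k, mul_left_cancel₀ hb ?_⟩).symm⟩
    linear_combination hk - hxy - a * ht
  · rintro ⟨t, hu, hv⟩
    have hau := hu.mul_left' (c := a)
    have hbv := hv.mul_left' (c := b)
    rw [← mul_assoc] at hau hbv
    rw [mul_comm b a] at hbv
    convert hau.add hbv using 1
    linear_combination -hxy

theorem isCoprime_of_linear_eq {R : Type*} [CommRing R] {a b c x y : R} (hc : IsCoprime c b)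
    (hxy : a * x + b * y = c) : IsCoprime x b := by
  rw [← hxy, IsCoprime.add_mul_left_left_iff] at hc
  exact hc.of_mul_left_right

theorem coprime_mul_iff_isUnit_intCast {u b m : ℕ} {z : ℤ} (hzb : IsCoprime z b)
    (hu : u ≡ z [ZMOD b * m]) : u.Coprime (b * m) ↔ IsUnit (z : ZMod m) := by
  have hcast : (u : ZMod (b * m)) = z := by
    exact_mod_cast (ZMod.intCast_eq_intCast_iff u z (b * m)).2 (by exact_mod_cast hu)
  rw [← ZMod.isUnit_iff_coprime, hcast, ZMod.coe_int_isUnit_iff_isCoprime,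
    ZMod.coe_int_isUnit_iff_isCoprime, Nat.cast_mul, IsCoprime.mul_left_iff]
  exact and_iff_right hzb.symm

theorem coprime_and_coprime_iff_isUnit_aeval {a b m u v : ℕ} {x y : ℤ} (hx : IsCoprime x b)
    (hy : IsCoprime y a) {t : ℤ} (hu : u ≡ x + b * t [ZMOD b * m])
    (hv : v ≡ y - a * t [ZMOD a * m]) :
    u.Coprime (b * m) ∧ v.Coprime (a * m) ↔
      IsUnit (aeval (t : ZMod m) (coordProd a b x y)) := by
  have hxt : IsCoprime (x + b * t) b := IsCoprime.add_mul_left_left_iff.2 hx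
  have hyt : IsCoprime (y - a * t) a := IsCoprime.sub_mul_left_left_iff.2 hy
  rw [coprime_mul_iff_isUnit_intCast hxt hu, coprime_mul_iff_isUnit_intCast hyt hv,
    ← IsUnit.mul_iff, aeval_coordProd]
  push_cast
  rfl

theorem card_primitive_solutions {a b m : ℕ} {c x y : ℤ} (ha : 0 < a) (hb : 0 < b) (hm : 0 < m)
    (hab : a.Coprime b) (hc : IsCoprime c (a * b)) (hxy : a * x + b * y = c) :
    ((Finset.Icc 1 (b * m) ×ˢ Finset.Icc 1 (a * m)).filter fun w : ℕ × ℕ =>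
        w.1.Coprime (b * m) ∧ w.2.Coprime (a * m) ∧
          (a : ℤ) * w.1 + b * w.2 ≡ c [ZMOD a * b * m]).card =
      {t : ZMod m | IsUnit (aeval t (coordProd a b x y))}.ncard := by
  have hx : IsCoprime x b := isCoprime_of_linear_eq hc.of_mul_right_right hxy
  have hy : IsCoprime y a := isCoprime_of_linear_eq hc.of_mul_right_left ((add_comm _ _).trans hxy)
  have hbm : 0 < b * m := by positivity
  have ham : 0 < a * m := by positivity
  have hb' : (b : ℤ) ≠ 0 := by positivity
  have hsol := linear_modEq_iff_exists (m := m) hb' hab.isCoprime hxy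
  choose u hu hu_unique using fun t : ZMod m =>
    existsUnique_mem_Icc_modEq hbm (x + b * t.cast)
  choose v hv hv_unique using fun t : ZMod m =>
    existsUnique_mem_Icc_modEq ham (y - a * t.cast)
  push_cast at hu hv hu_unique hv_unique
  have hunit (t : ZMod m) := coprime_and_coprime_iff_isUnit_aeval hx hy (hu t).2 (hv t).2
  simp only [ZMod.intCast_zmod_cast] at hunit
  rw [← Set.ncard_coe_finset]
  refine (Set.ncard_congr (fun t _ => (u t, v t)) ?_ ?_ ?_).symm
  · intro t ht
    obtain ⟨hut, hvt⟩ := (hunit t).2 ht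
    simp only [Finset.coe_filter, Finset.mem_product, Set.mem_ofPred_eq, hsol]
    exact ⟨⟨(hu t).1, (hv t).1⟩, hut, hvt, t.cast, (hu t).2, (hv t).2⟩
  · intro s t _ _ hst
    have hmod : x + b * s.cast ≡ x + b * t.cast [ZMOD b * m] :=
      (hu s).2.symm.trans ((Prod.mk.inj hst).1 ▸ (hu t).2)
    have := (hmod.add_left_cancel' x).mul_left_cancel' hb'
    simpa using (ZMod.intCast_eq_intCast_iff _ _ m).2 this
  · rintro ⟨p, q⟩ hpq
    simp only [Finset.coe_filter, Finset.mem_product, Set.mem_ofPred_eq, hsol] at hpq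
    obtain ⟨⟨hp, hq⟩, hpcop, hqcop, t, hpt, hqt⟩ := hpq
    have ht : (t : ZMod m).cast ≡ t [ZMOD m] := (ZMod.intCast_eq_intCast_iff _ _ m).1 (by simp)
    have hup : p = u t := hu_unique t p ⟨hp, hpt.trans (ht.symm.mul_left'.add_left x)⟩
    have hvq : q = v t := hv_unique t q ⟨hq, hqt.trans (ht.symm.mul_left'.sub_left y)⟩
    exact ⟨t, (coprime_and_coprime_iff_isUnit_aeval hx hy hpt hqt).1 ⟨hpcop, hqcop⟩,
      Prod.ext hup.symm hvq.symm⟩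

theorem prod_primeFactors_split_by_dvd {M : Type*} [CommMonoid M] {d m : ℕ} (hdm : d * m ≠ 0)
    (c : ℤ) (g : ℕ → M) :
    ∏ p ∈ m.primeFactors, g p =
      (∏ p ∈ m.primeFactors with p ∣ d, g p) *
        (∏ p ∈ (d * m).primeFactors with ¬ p ∣ d ∧ (p : ℤ) ∣ c, g p) *
        ∏ p ∈ (d * m).primeFactors with ¬ ((p : ℕ) : ℤ) ∣ d * c, g p := by
  have hnot_dvd : (d * m).primeFactors.filter (¬ · ∣ d) = m.primeFactors.filter (¬ · ∣ d) := by
    obtain ⟨hd, hm⟩ := mul_ne_zero_iff.1 hdm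
    rw [Nat.primeFactors_mul hd hm, Finset.filter_union, Finset.union_eq_right]
    intro p hp
    obtain ⟨hpd, hnpd⟩ := Finset.mem_filter.1 hp
    exact absurd (Nat.dvd_of_mem_primeFactors hpd) hnpd
  have hnot_dvd_mul (p : ℕ) (hp : p ∈ (d * m).primeFactors) :
      ¬ (p : ℤ) ∣ d * c ↔ ¬ p ∣ d ∧ ¬ (p : ℤ) ∣ c := by
    rw [(Nat.prime_iff_prime_int.1 (Nat.prime_of_mem_primeFactors hp)).dvd_mul,
      Int.natCast_dvd_natCast, not_or]
  rw [Finset.filter_congr hnot_dvd_mul, ← Finset.filter_filter, ← Finset.filter_filter, mul_assoc,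
    Finset.prod_filter_mul_prod_filter_not, hnot_dvd, Finset.prod_filter_mul_prod_filter_not]

theorem ncard_isUnit_aeval_coordProd {a b m : ℕ} {c x y : ℤ} (hn : a * b * m ≠ 0)
    (hc : IsCoprime c (a * b)) (hxy : a * x + b * y = c) :
    ({t : ZMod m | IsUnit (aeval t (coordProd a b x y))}.ncard : ℚ) =
      m * (∏ p ∈ m.primeFactors with p ∣ a * b, (1 - 1 / (p : ℚ))) *
        (∏ p ∈ (a * b * m).primeFactors with ¬ p ∣ a * b ∧ (p : ℤ) ∣ c, (1 - 1 / (p : ℚ))) *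
        ∏ p ∈ (a * b * m).primeFactors with ¬ ((p : ℕ) : ℤ) ∣ a * b * c, (1 - 2 / (p : ℚ)) := by
  have : NeZero m := ⟨right_ne_zero_of_mul hn⟩
  have hdvd_iff (p : ℕ) : p ∣ a * b ↔ (p : ℤ) ∣ a * b := by
    exact_mod_cast Int.natCast_dvd_natCast.symm
  rw [ncard_isUnit_aeval_zmod, prod_primeFactors_split_by_dvd hn c, ← mul_assoc, ← mul_assoc,
    Nat.cast_mul a b]
  refine congr_arg₂ _ (congr_arg₂ _ (congr_arg _ ?_) ?_) ?_
  all_goals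
    refine Finset.prod_congr rfl fun p hp => ?_
    obtain ⟨hpm, hp⟩ := Finset.mem_filter.1 hp
    have hprime := Nat.prime_of_mem_primeFactors hpm
    have : Fact p.Prime := ⟨hprime⟩
  · have hpc : ¬ (p : ℤ) ∣ c := fun h =>
      (Nat.prime_iff_prime_int.1 hprime).not_isUnit (hc.isUnit_of_dvd' h ((hdvd_iff p).1 hp))
    rw [ncard_roots_coordProd_of_dvd hxy ((hdvd_iff p).1 hp) hpc, Nat.cast_one]
  · rw [ncard_roots_coordProd_of_not_dvd_of_dvd hxy (mt (hdvd_iff p).2 hp.1) hp.2, Nat.cast_one]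
  · rw [ncard_roots_coordProd_of_not_dvd hxy hp, Nat.cast_ofNat]

theorem stmt_12 (n a b : ℕ) (hn : 0 < n) (ha : a ∣ n) (hb : b ∣ n)
    (hab : Nat.Coprime a b) (m : ℕ) (hm : m = n / (a * b))
    (c : ℤ) (hc : Int.gcd c ((a : ℤ) * b) = 1) :
    ((((Finset.Icc 1 (n / a)) ×ˢ (Finset.Icc 1 (n / b))).filter
        (fun p => Nat.Coprime p.1 (n / a) ∧ Nat.Coprime p.2 (n / b) ∧
          ((a : ℤ) * p.1 + (b : ℤ) * p.2 ≡ c [ZMOD n]))).card : ℚ) =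
      (m : ℚ) * (∏ p ∈ m.primeFactors.filter (fun p => p ∣ a * b), (1 - 1 / (p : ℚ)))
        * (∏ p ∈ n.primeFactors.filter (fun p => ¬ p ∣ a * b ∧ (p : ℤ) ∣ c),
            (1 - 1 / (p : ℚ)))
        * (∏ p ∈ n.primeFactors.filter (fun p : ℕ => ¬ ((p : ℤ) ∣ ((a : ℤ) * b * c))),
            (1 - 2 / (p : ℚ))) := by
  have hn_eq : n = a * b * m := by
    rw [hm, Nat.mul_div_cancel' (hab.mul_dvd_of_dvd_of_dvd ha hb)]
  subst hn_eq
  obtain ⟨⟨ha0, hb0⟩, hm0⟩ : (0 < a ∧ 0 < b) ∧ 0 < m := by simpa [Nat.pos_iff_ne_zero] using hn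
  have hc_coprime : IsCoprime c (a * b) := Int.isCoprime_iff_gcd_eq_one.2 hc
  obtain ⟨u, v, huv⟩ := hab.isCoprime
  have hxy : a * (c * u) + b * (c * v) = c := by linear_combination c * huv
  have hdiv_a : a * b * m / a = b * m := by rw [mul_assoc, Nat.mul_div_cancel_left _ ha0]
  have hdiv_b : a * b * m / b = a * m := by
    rw [mul_comm a, mul_assoc, Nat.mul_div_cancel_left _ hb0]
  rw [hdiv_a, hdiv_b, ← ncard_isUnit_aeval_coordProd hn.ne' hc_coprime hxy,
    ← card_primitive_solutions ha0 hb0 hm0 hab hc_coprime hxy]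
  push_cast
  rfl
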